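/- arXiv:1801.00431 — 7 statements merged into one kernel-verified Lean document; each statement's English description precedes it below -/
import Mathlib

section
/- For every natural number i and real numbers c > 0 and d > 0, the integral ∫₀^c x^i e^{-d/x} dx equals c^{i+1} · Ei(i+2, d/c). -/
open MeasureTheory Real

/-- Generalized exponential integral `Ei(n, s) = ∫₁^∞ e^{-s t} t^{-n} dt`. -/
noncomputable def Ei (n : ℕ) (s : ℝ) : ℝ :=
  ∫ t in Set.Ioi (1 : ℝ), Real.exp (-s * t) / t ^ n

section Inversion

open scoped Pointwise

variable {E : Type*} [NormedAddCommGroup E] [NormedSpace ℝ E]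

theorem setIntegral_inv_eq_setIntegral_inv_sq_smul {s : Set ℝ} (hs : MeasurableSet s)
    (hs₀ : (0 : ℝ) ∉ s) (f : ℝ → E) :
    ∫ x in s⁻¹, f x = ∫ t in s, (t ^ 2)⁻¹ • f t⁻¹ := by
  have hasDerivWithinAt_inv_on : ∀ t ∈ s, HasDerivWithinAt (·⁻¹) (-(t ^ 2)⁻¹) s t := fun t ht ↦
    hasDerivWithinAt_inv (ne_of_mem_of_not_mem ht hs₀) s
  rw [← Set.image_inv_eq_inv, integral_image_eq_integral_abs_deriv_smul hs hasDerivWithinAt_inv_on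
    inv_injective.injOn]
  simp only [abs_neg, abs_inv, abs_sq]

theorem intervalIntegral_zero_eq_setIntegral_Ioi_inv {c : ℝ} (hc : 0 < c) (f : ℝ → E) :
    ∫ x in (0 : ℝ)..c, f x = ∫ t in Set.Ioi c⁻¹, (t ^ 2)⁻¹ • f t⁻¹ := by
  have inv_Ioi : (Set.Ioi c⁻¹)⁻¹ = Set.Ioo 0 c := by
    rw [Set.inv_Ioi₀ (inv_pos.2 hc), inv_inv]
  rw [intervalIntegral.integral_of_le hc.le, integral_Ioc_eq_integral_Ioo, ← inv_Ioi,
    setIntegral_inv_eq_setIntegral_inv_sq_smul measurableSet_Ioi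
      (Set.notMem_Ioi.2 (inv_pos.2 hc).le)]

end Inversion

theorem setIntegral_Ioi_exp_div_pow_eq_mul_Ei (n : ℕ) (s : ℝ) {b : ℝ} (hb : 0 < b) :
    ∫ t in Set.Ioi b, exp (-s * t) / t ^ n = b / b ^ n * Ei n (s * b) := by
  calc ∫ t in Set.Ioi b, exp (-s * t) / t ^ n
      = b * ∫ t in Set.Ioi 1, exp (-s * (b * t)) / (b * t) ^ n := by
        rw [integral_comp_mul_left_Ioi (fun t ↦ exp (-s * t) / t ^ n) 1 hb, mul_one, smul_eq_mul,
          mul_inv_cancel_left₀ hb.ne']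
    _ = b * ∫ t in Set.Ioi 1, (b ^ n)⁻¹ * (exp (-(s * b) * t) / t ^ n) := by
        congr! 3 with t
        rw [mul_pow, ← mul_assoc, neg_mul s b]
        ring
    _ = b / b ^ n * Ei n (s * b) := by
        rw [integral_const_mul, ← mul_assoc, ← div_eq_mul_inv, Ei]

theorem stmt_0 (i : ℕ) (c d : ℝ) (hc : 0 < c) (hd : 0 < d) :
    ∫ x in (0 : ℝ)..c, x ^ i * Real.exp (-d / x)
      = c ^ (i + 1) * Ei (i + 2) (d / c) := by
  calc ∫ x in (0 : ℝ)..c, x ^ i * exp (-d / x)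
      = ∫ t in Set.Ioi c⁻¹, (t ^ 2)⁻¹ • (t⁻¹ ^ i * exp (-d / t⁻¹)) :=
        intervalIntegral_zero_eq_setIntegral_Ioi_inv hc _
    _ = ∫ t in Set.Ioi c⁻¹, exp (-d * t) / t ^ (i + 2) := by
        congr! 2 with t
        rw [smul_eq_mul, div_inv_eq_mul, pow_add, inv_pow]
        ring
    _ = c⁻¹ / c⁻¹ ^ (i + 2) * Ei (i + 2) (d * c⁻¹) :=
        setIntegral_Ioi_exp_div_pow_eq_mul_Ei (i + 2) d (inv_pos.2 hc)
    _ = c ^ (i + 1) * Ei (i + 2) (d / c) := by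
        have scale : c⁻¹ / c⁻¹ ^ (i + 2) = c ^ (i + 1) := by
          rw [inv_pow]
          field_simp
          ring
        rw [scale, ← div_eq_mul_inv]
end

section
/- For every natural number i and real number d > 0, the limit as x → 0⁺ of x^{i+1} · Ei(i+2, d/x) is 0. -/
open MeasureTheory Real Filter

/-!
Dropping the factor `t ^ (-n) ≤ 1` from the integrand gives `0 ≤ Ei n s ≤ exp (-s) / s`, so `Ei n`
decays at infinity faster than any power. Substituting `s = d / x` turns this into the limit
at `0⁺`.
-/

theorem Ei_nonneg (n : ℕ) (s : ℝ) : 0 ≤ Ei n s :=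
  setIntegral_nonneg measurableSet_Ioi fun t (ht : 1 < t) => by positivity

theorem Ei_le_exp_neg_div (n : ℕ) {s : ℝ} (hs : 0 < s) : Ei n s ≤ exp (-s) / s := by
  have hs' : -s < 0 := neg_lt_zero.mpr hs
  have integrand_nonneg : ∀ t ∈ Set.Ioi (1 : ℝ), 0 ≤ exp (-s * t) / t ^ n :=
    fun t (ht : 1 < t) => by positivity
  have integrand_le : ∀ t ∈ Set.Ioi (1 : ℝ), exp (-s * t) / t ^ n ≤ exp (-s * t) :=
    fun t (ht : 1 < t) => div_le_self (exp_nonneg _) (one_le_pow₀ ht.le)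
  calc Ei n s ≤ ∫ t in Set.Ioi (1 : ℝ), exp (-s * t) :=
        integral_mono_of_nonneg (ae_restrict_of_forall_mem measurableSet_Ioi integrand_nonneg)
          (integrableOn_exp_mul_Ioi hs' 1)
          (ae_restrict_of_forall_mem measurableSet_Ioi integrand_le)
    _ = exp (-s) / s := by rw [integral_exp_mul_Ioi hs', mul_one, neg_div_neg_eq]

theorem tendsto_rpow_mul_Ei_atTop_nhds_zero (n : ℕ) (r : ℝ) :
    Tendsto (fun s : ℝ => s ^ r * Ei n s) atTop (nhds 0) := by
  have exp_decay : Tendsto (fun s : ℝ => s ^ (r - 1) * exp (-s)) atTop (nhds 0) := by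
    simpa only [neg_mul, one_mul] using
      tendsto_rpow_mul_exp_neg_mul_atTop_nhds_zero (r - 1) 1 one_pos
  refine squeeze_zero' ?_ ?_ exp_decay
  · filter_upwards [eventually_gt_atTop 0] with s hs
    exact mul_nonneg (rpow_nonneg hs.le r) (Ei_nonneg n s)
  · filter_upwards [eventually_gt_atTop 0] with s hs
    calc s ^ r * Ei n s ≤ s ^ r * (exp (-s) / s) := by gcongr; exact Ei_le_exp_neg_div n hs
      _ = s ^ (r - 1) * exp (-s) := by rw [rpow_sub_one hs.ne']; ring

theorem stmt_1_general (n : ℕ) (r d : ℝ) (hd : 0 < d) :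
    Tendsto (fun x : ℝ => x ^ r * Ei n (d / x)) (nhdsWithin 0 (Set.Ioi 0)) (nhds 0) := by
  have tendsto_div : Tendsto (fun x : ℝ => d / x) (nhdsWithin 0 (Set.Ioi 0)) atTop := by
    simpa only [div_eq_mul_inv] using tendsto_inv_nhdsGT_zero.const_mul_atTop hd
  have scaled : Tendsto (fun x : ℝ => d ^ r * ((d / x) ^ (-r) * Ei n (d / x)))
      (nhdsWithin 0 (Set.Ioi 0)) (nhds 0) := by
    simpa only [mul_zero, Function.comp_apply] using
      ((tendsto_rpow_mul_Ei_atTop_nhds_zero n (-r)).comp tendsto_div).const_mul (d ^ r)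
  refine scaled.congr' ?_
  filter_upwards [self_mem_nhdsWithin] with x (hx : 0 < x)
  have rpow_eq : d ^ r * (d / x) ^ (-r) = x ^ r := by
    rw [rpow_neg (by positivity), div_rpow hd.le hx.le, inv_div,
      mul_div_cancel₀ _ (rpow_pos_of_pos hd r).ne']
  rw [← mul_assoc, rpow_eq]

theorem stmt_1 (i : ℕ) (d : ℝ) (hd : 0 < d) :
    Tendsto (fun x : ℝ => x ^ (i + 1) * Ei (i + 2) (d / x))
      (nhdsWithin 0 (Set.Ioi 0)) (nhds 0) := by
  simpa only [rpow_natCast] using stmt_1_general (i + 2) (i + 1 : ℕ) d hd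
end

section
/- For all real numbers c > 0 and d > 0, ∫₀^c e^{-x - d/x} dx = Σ_{i=0}^∞ ((-1)^i c^{i+1} / i!) · Ei(i+2, d/c), where the series on the right converges. -/
open MeasureTheory Real

/-!
Expanding `e^{-x}` in its Taylor series and integrating termwise against the weight `e^{-d/x}`,
which is bounded by `1` on `(0, c]`, reduces the identity to the moments of that weight: the
substitution `x = c / t` gives `∫₀^c e^{-d/x} xⁿ dx = c^{n+1} Ei(n + 2, d / c)`.
-/

theorem image_const_div_Ioi_of_pos {K : Type*} [Field K] [LinearOrder K] [IsStrictOrderedRing K]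
    {a c : K} (ha : 0 < a) (hc : 0 < c) :
    (fun t : K => c / t) '' Set.Ioi a = Set.Ioo 0 (c / a) := by
  ext x
  constructor
  · rintro ⟨t, hat, rfl⟩
    exact ⟨div_pos hc (ha.trans hat), div_lt_div_of_pos_left hc ha hat⟩
  · rintro ⟨hx, hxc⟩
    exact ⟨c / x, (lt_div_comm₀ hx ha).1 hxc, div_div_cancel₀ hc.ne'⟩

section IntervalIntegral

variable {E : Type*} [NormedAddCommGroup E] [NormedSpace ℝ E]

theorem integral_zero_div_eq_integral_Ioi {a c : ℝ} (ha : 0 < a) (hc : 0 < c) (f : ℝ → E) :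
    ∫ x in (0 : ℝ)..c / a, f x = ∫ t in Set.Ioi a, (c / t ^ 2) • f (c / t) := by
  have hderiv : ∀ t ∈ Set.Ioi a,
      HasDerivWithinAt (fun t : ℝ => c / t) (c * -(t ^ 2)⁻¹) (Set.Ioi a) t := fun t ht => by
    simpa only [div_eq_mul_inv] using
      (hasDerivWithinAt_inv (ha.trans ht).ne' (Set.Ioi a)).const_mul c
  have hinj : Set.InjOn (fun t : ℝ => c / t) (Set.Ioi a) := fun _ _ _ _ h => by
    simpa only [div_eq_mul_inv, mul_right_inj' hc.ne', inv_inj] using h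
  rw [intervalIntegral.integral_of_le (div_pos hc ha).le, integral_Ioc_eq_integral_Ioo,
    ← image_const_div_Ioi_of_pos ha hc,
    integral_image_eq_integral_abs_deriv_smul measurableSet_Ioi hderiv hinj]
  simp only [mul_neg, abs_neg, ← div_eq_mul_inv, abs_div, abs_of_pos hc, abs_sq]

theorem hasSum_integral_mul_pow_smul [CompleteSpace E] {a b r : ℝ} {w : ℝ → ℝ} {u : ℕ → E}
    {g : ℝ → E} (hw : IntervalIntegrable w volume a b) (hr : ∀ x ∈ Set.uIoc a b, |x| ≤ r)
    (hu : Summable fun i => r ^ i * ‖u i‖)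
    (hg : ∀ x ∈ Set.uIoc a b, HasSum (fun i => x ^ i • u i) (g x)) :
    HasSum (fun i => (∫ x in a..b, w x * x ^ i) • u i) (∫ x in a..b, w x • g x) := by
  simp only [← intervalIntegral.integral_smul_const]
  refine intervalIntegral.hasSum_integral_of_dominated_convergence
    (fun i x => ‖w x‖ * (r ^ i * ‖u i‖)) (fun i => ?_) (fun i => .of_forall fun x hx => ?_)
    (.of_forall fun x _ => hu.mul_left _) ?_ (.of_forall fun x hx => ?_)
  · exact (hw.def'.aestronglyMeasurable.mul (by fun_prop)).smul_const (u i)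
  · rw [norm_smul, norm_mul, norm_pow, norm_eq_abs x, mul_assoc]
    gcongr
    exact hr x hx
  · simpa only [tsum_mul_left] using hw.norm.mul_const _
  · simpa only [mul_smul] using (hg x hx).const_smul (w x)

end IntervalIntegral

section ExpNegDiv

variable {c d : ℝ}

theorem intervalIntegrable_exp_neg_div (hc : 0 ≤ c) (hd : 0 ≤ d) :
    IntervalIntegrable (fun x => exp (-(d / x))) volume 0 c := by
  refine (intervalIntegrable_const (c := (1 : ℝ))).mono_fun'
    (by fun_prop : Measurable fun x : ℝ => exp (-(d / x))).aestronglyMeasurable ?_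
  filter_upwards [ae_restrict_mem measurableSet_uIoc] with x hx
  rw [Set.uIoc_of_le hc] at hx
  rw [norm_of_nonneg (exp_pos _).le, exp_le_one_iff]
  exact neg_nonpos.2 (div_nonneg hd hx.1.le)

theorem integral_exp_neg_div_mul_pow (hc : 0 < c) (n : ℕ) :
    ∫ x in (0 : ℝ)..c, exp (-(d / x)) * x ^ n = c ^ (n + 1) * Ei (n + 2) (d / c) := by
  have hsubst := integral_zero_div_eq_integral_Ioi one_pos hc fun x => exp (-(d / x)) * x ^ n
  rw [div_one] at hsubst
  rw [hsubst, Ei, ← integral_const_mul]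
  refine setIntegral_congr_fun measurableSet_Ioi fun t ht => ?_
  have ht0 : t ≠ 0 := (one_pos.trans ht).ne'
  have hexponent : -(d / (c / t)) = -(d / c) * t := by field_simp
  simp only [smul_eq_mul, hexponent, div_pow]
  field_simp
  ring

theorem hasSum_mul_Ei_smul {E : Type*} [NormedAddCommGroup E] [NormedSpace ℝ E] [CompleteSpace E]
    {u : ℕ → E} {g : ℝ → E} (hc : 0 < c) (hd : 0 ≤ d) (hu : Summable fun i => c ^ i * ‖u i‖)
    (hg : ∀ x ∈ Set.Ioc 0 c, HasSum (fun i => x ^ i • u i) (g x)) :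
    HasSum (fun i => (c ^ (i + 1) * Ei (i + 2) (d / c)) • u i)
      (∫ x in (0 : ℝ)..c, exp (-(d / x)) • g x) := by
  rw [← Set.uIoc_of_le hc.le] at hg
  have habs : ∀ x ∈ Set.uIoc 0 c, |x| ≤ c := fun x hx => by
    rw [Set.uIoc_of_le hc.le] at hx
    exact (abs_of_pos hx.1).trans_le hx.2
  simpa only [integral_exp_neg_div_mul_pow hc] using
    hasSum_integral_mul_pow_smul (intervalIntegrable_exp_neg_div hc.le hd) habs hu hg

end ExpNegDiv

theorem hasSum_pow_mul_neg_one_pow_div_factorial (x : ℝ) :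
    HasSum (fun i : ℕ => x ^ i * ((-1) ^ i / (Nat.factorial i : ℝ))) (exp (-x)) := by
  rw [exp_eq_exp_ℝ]
  refine (NormedSpace.expSeries_div_hasSum_exp (-x)).congr_fun fun i => ?_
  rw [neg_pow]
  ring

theorem stmt_2 (c d : ℝ) (hc : 0 < c) (hd : 0 < d) :
    Summable (fun i : ℕ =>
      (-1 : ℝ) ^ i * c ^ (i + 1) / (Nat.factorial i) * Ei (i + 2) (d / c)) ∧
    ∫ x in (0 : ℝ)..c, Real.exp (-x - d / x)
      = ∑' i : ℕ, (-1 : ℝ) ^ i * c ^ (i + 1) / (Nat.factorial i) * Ei (i + 2) (d / c) := by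
  have hcoeff : Summable fun i : ℕ => c ^ i * ‖(-1 : ℝ) ^ i / (Nat.factorial i : ℝ)‖ := by
    simpa [div_eq_mul_inv] using summable_pow_div_factorial c
  have hsum : HasSum (fun i : ℕ =>
      (-1 : ℝ) ^ i * c ^ (i + 1) / (Nat.factorial i) * Ei (i + 2) (d / c))
      (∫ x in (0 : ℝ)..c, exp (-x - d / x)) := by
    have hintegrand (x : ℝ) : exp (-x - d / x) = exp (-(d / x)) • exp (-x) := by
      rw [smul_eq_mul, ← exp_add, sub_eq_neg_add]
    simp only [hintegrand]
    refine (hasSum_mul_Ei_smul hc hd.le hcoeff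
      fun x _ => hasSum_pow_mul_neg_one_pow_div_factorial x).congr_fun fun i => ?_
    rw [smul_eq_mul]
    ring
  exact ⟨hsum.summable, hsum.tsum_eq.symm⟩
end

section
/- Let θ, ψ, φ, λ be real numbers with ψ > 0, φ > 0, λ > 0, set ϱ = θ - (1/ψ)√(π/2) and ϑ = θ + (1/ψ)√(π/2), and assume ϱ > 0. Define Ω(γ) = 1 for γ ≤ ϱ, Ω(γ) = 1/2 - (ψ/√(2π))(γ - θ) for ϱ < γ < ϑ, and Ω(γ) = 0 for γ ≥ ϑ. Then the iterated integral ∫₀^∞ ∫₀^∞ Ω(φ · y · min(x, λ)) e^{-x - y} dy dx equals 1 - (1/2 - (ψ/√(2π))(θ - ϱ - λφ)) e^{-λ - ϱ/(λφ)} - (1/2 + (ψ/√(2π))(θ - ϑ - λφ)) e^{-λ - ϑ/(λφ)} + Σ_{i=0}^∞ ((-1)^i λ^{i+1} / i!) · [ (ψ λ φ/√(2π)) · ( Ei(i+3, ϑ/(λφ)) - Ei(i+3, ϱ/(λφ)) ) - (1/2 - ψ(θ-ϱ)/√(2π)) · Ei(i+2, ϱ/(λφ)) - (1/2 + ψ(θ-ϑ)/√(2π))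 · Ei(i+2, ϑ/(λφ)) ], where the series converges. (This is the exact, infinite-sum form of Theorem 1's finite-battery outage expression: the left-hand side is the average of the linearized error probability Ω over the SNR γ = φ y min(x, λ) when x and y are independent unit-mean exponential channel gains.) -/
open MeasureTheory Real

/-- Piecewise-linear approximation `Ω` of the finite-blocklength error probability,
with parameters `ψ, θ` and breakpoints `ϱ < ϑ`. -/
noncomputable def Omega (ψ θ ϱ ϑ γ : ℝ) : ℝ :=
  if γ ≤ ϱ then 1
  else if γ < ϑ then 1 / 2 - ψ / Real.sqrt (2 * π) * (γ - θ)
  else 0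

/-!
The continuous ramp `Ω` is a multiple of the difference of the hinges `(ϑ - γ)⁺` and `(ϱ - γ)⁺`.
Since `𝔼[(b - m Y)⁺] = b - m + m e^{-b/m}` for a unit exponential `Y`, averaging over `y` leaves
`1 + c m (e^{-ϑ/m} - e^{-ϱ/m})`, where `m = φ min(x, λ)` and `c = ψ / √(2π)`. In the average over
`x`, the event `x > λ` gives the two closed exponential terms. On `x ≤ λ` the substitution
`x = λ / t` yields `∫₁^∞ e^{-λ/t} e^{-bt/(λφ)} t⁻³ dt` for `b = ϱ, ϑ`, and expanding `e^{-λ/t}` in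
powers of `λ / t` gives the series of `Ei(i + 3, b/(λφ))`. The `Ei(i + 2, ·)` terms have
coefficient zero.
-/

open Set

lemma integrableOn_max_sub_mul_zero_mul_exp_neg (a b : ℝ) :
    IntegrableOn (fun y ↦ max (b - a * y) 0 * exp (-y)) (Ioi 0) := by
  have hexp : IntegrableOn (fun y ↦ exp (-y)) (Ioi 0) := integrableOn_exp_neg_Ioi 0
  have hmul : IntegrableOn (fun y ↦ exp (-y) * y) (Ioi 0) := by
    simpa [show (2 : ℝ) - 1 = 1 by norm_num] using GammaIntegral_convergent zero_lt_two
  refine ((hexp.const_mul b).sub (hmul.const_mul a)).pos_part.congr (.of_forall fun y ↦ ?_)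
  simp only [Pi.sub_apply]
  rw [max_mul_of_nonneg _ _ (exp_pos (-y)).le, zero_mul]
  ring_nf

lemma intervalIntegral_sub_mul_mul_exp_neg (a b u v : ℝ) :
    ∫ y in u..v, (b - a * y) * exp (-y)
      = (a - b + a * v) * exp (-v) - (a - b + a * u) * exp (-u) := by
  refine intervalIntegral.integral_eq_sub_of_hasDerivAt
    (f := fun y ↦ (a - b + a * y) * exp (-y)) (fun y _ ↦ ?_)
    (Continuous.intervalIntegrable (by fun_prop) _ _)
  have hlin : HasDerivAt (fun y ↦ a - b + a * y) a y := by
    simpa using ((hasDerivAt_id y).const_mul a).const_add (a - b)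
  exact (hlin.mul (hasDerivAt_neg y).exp).congr_deriv (by ring)

lemma integral_Ioi_max_sub_mul_zero_mul_exp_neg {a b : ℝ} (ha : 0 < a) (hb : 0 ≤ b) :
    ∫ y in Ioi 0, max (b - a * y) 0 * exp (-y) = b - a + a * exp (-(b / a)) := by
  have hba : 0 ≤ b / a := by positivity
  have hright : ∀ y ∈ Ioi 0 \ Ioc 0 (b / a), max (b - a * y) 0 * exp (-y) = 0 := by
    rintro y ⟨hy, hy'⟩
    have hlt : b < y * a := (div_lt_iff₀ ha).mp (not_le.mp fun h ↦ hy' ⟨hy, h⟩)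
    rw [max_eq_right (by linarith), zero_mul]
  have hleft : ∀ y ∈ Ioc 0 (b / a), max (b - a * y) 0 * exp (-y) = (b - a * y) * exp (-y) := by
    rintro y ⟨-, hy⟩
    have hle : y * a ≤ b := (le_div_iff₀ ha).mp hy
    rw [max_eq_left (by linarith)]
  calc ∫ y in Ioi 0, max (b - a * y) 0 * exp (-y)
      = ∫ y in Ioc 0 (b / a), max (b - a * y) 0 * exp (-y) :=
        setIntegral_eq_of_subset_of_forall_sdiff_eq_zero measurableSet_Ioi
          Ioc_subset_Ioi_self hright
    _ = ∫ y in 0..b / a, (b - a * y) * exp (-y) := by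
        rw [setIntegral_congr_fun measurableSet_Ioc hleft, intervalIntegral.integral_of_le hba]
    _ = b - a + a * exp (-(b / a)) := by
        rw [intervalIntegral_sub_mul_mul_exp_neg, mul_div_cancel₀ b ha.ne', neg_zero, exp_zero]
        ring

lemma hasSum_pow_div_factorial_mul_Ei (z : ℝ) (n : ℕ) {s : ℝ} (hs : 0 < s) :
    HasSum (fun i : ℕ ↦ z ^ i / i.factorial * Ei (i + n) s)
      (∫ t in Ioi 1, exp (z / t) * (exp (-s * t) / t ^ n)) := by
  simp only [Ei, ← integral_const_mul]
  refine hasSum_integral_of_dominated_convergence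
    (fun i t ↦ |z| ^ i / i.factorial * exp (-s * t)) (fun i ↦ ?_) (fun i ↦ ?_) ?_ ?_ ?_
  · exact Measurable.aestronglyMeasurable (by fun_prop)
  · filter_upwards [ae_restrict_mem measurableSet_Ioi] with t (ht : 1 < t)
    have hpow : 1 ≤ t ^ (i + n) := one_le_pow₀ ht.le
    simp only [norm_mul, norm_div, norm_pow, norm_eq_abs, abs_exp, Nat.abs_cast,
      abs_of_pos (zero_lt_one.trans ht)]
    gcongr
    exact div_le_self (exp_pos _).le hpow
  · exact .of_forall fun t ↦ (summable_pow_div_factorial |z|).mul_right _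
  · simp only [tsum_mul_right]
    exact (integrableOn_exp_mul_Ioi (neg_neg_of_pos hs) 1).const_mul _
  · filter_upwards [ae_restrict_mem measurableSet_Ioi] with t (ht : 1 < t)
    have hexp : HasSum (fun i : ℕ ↦ (z / t) ^ i / i.factorial) (exp (z / t)) := by
      simpa only [exp_eq_exp_ℝ] using NormedSpace.expSeries_div_hasSum_exp (z / t)
    refine (hexp.mul_right (exp (-s * t) / t ^ n)).congr_fun fun i ↦ ?_
    rw [div_pow, pow_add]
    field_simp

lemma image_const_div_Ioi_one {l : ℝ} (hl : 0 < l) : (fun t ↦ l / t) '' Ioi 1 = Ioo 0 l := by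
  ext x
  constructor
  · rintro ⟨t, ht : 1 < t, rfl⟩
    exact ⟨by positivity, div_lt_self hl ht⟩
  · rintro ⟨hx, hxl⟩
    exact ⟨l / x, (one_lt_div hx).mpr hxl, div_div_cancel₀ hl.ne'⟩

lemma setIntegral_Ioc_zero_eq_integral_Ioi_one {E : Type*} [NormedAddCommGroup E]
    [NormedSpace ℝ E] {l : ℝ} (hl : 0 < l) (f : ℝ → E) :
    ∫ x in Ioc 0 l, f x = ∫ t in Ioi 1, (l / t ^ 2) • f (l / t) := by
  have hderiv : ∀ t ∈ Ioi (1 : ℝ), HasDerivWithinAt (fun t ↦ l / t) (-(l / t ^ 2)) (Ioi 1) t := by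
    intro t (ht : 1 < t)
    have hinv := (hasDerivAt_inv (zero_lt_one.trans ht).ne').const_mul l
    exact (hinv.congr_deriv (by ring)).hasDerivWithinAt
  have hanti : AntitoneOn (fun t ↦ l / t) (Ioi 1) := fun t (ht : 1 < t) u _ htu ↦
    div_le_div_of_nonneg_left hl.le (zero_lt_one.trans ht) htu
  rw [integral_Ioc_eq_integral_Ioo, ← image_const_div_Ioi_one hl,
    integral_image_eq_integral_deriv_smul_of_antitoneOn measurableSet_Ioi hderiv hanti]
  simp only [neg_neg]

lemma hasSum_integral_Ioc_pow_mul_exp_neg_div (n : ℕ) {l b : ℝ} (hl : 0 < l) (hb : 0 < b) :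
    HasSum (fun i : ℕ ↦ (-1) ^ i * l ^ (i + 1) / i.factorial * (l ^ n * Ei (i + (n + 2)) (b / l)))
      (∫ x in Ioc 0 l, x ^ n * exp (-(b / x)) * exp (-x)) := by
  have hsubst : ∫ x in Ioc 0 l, x ^ n * exp (-(b / x)) * exp (-x)
      = l ^ (n + 1) * ∫ t in Ioi 1, exp (-l / t) * (exp (-(b / l) * t) / t ^ (n + 2)) := by
    rw [setIntegral_Ioc_zero_eq_integral_Ioi_one hl, ← integral_const_mul]
    refine setIntegral_congr_fun measurableSet_Ioi fun t (ht : 1 < t) ↦ ?_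
    have hexponent : b / (l / t) = b / l * t := by field_simp
    simp only [smul_eq_mul, hexponent, neg_div, neg_mul, div_pow]
    field_simp
    ring
  rw [hsubst]
  refine ((hasSum_pow_div_factorial_mul_Ei (-l) (n + 2) (div_pos hb hl)).mul_left
    (l ^ (n + 1))).congr_fun fun i ↦ ?_
  rw [neg_pow l]
  ring

lemma integrableOn_pow_mul_exp_neg_div_mul_exp_neg (n : ℕ) (l : ℝ) {b : ℝ} (hb : 0 ≤ b) :
    IntegrableOn (fun x ↦ x ^ n * exp (-(b / x)) * exp (-x)) (Ioc 0 l) := by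
  refine .of_bound measure_Ioc_lt_top (Measurable.aestronglyMeasurable (by fun_prop)) (l ^ n) ?_
  filter_upwards [ae_restrict_mem measurableSet_Ioc] with x ⟨hx, hxl⟩
  have hdiv : exp (-(b / x)) ≤ 1 := exp_le_one_iff.mpr (neg_nonpos.mpr (by positivity))
  have hexp : exp (-x) ≤ 1 := exp_le_one_iff.mpr (neg_nonpos.mpr hx.le)
  rw [norm_of_nonneg (by positivity)]
  calc x ^ n * exp (-(b / x)) * exp (-x) ≤ x ^ n * 1 * 1 := by gcongr
    _ ≤ l ^ n := by
      rw [mul_one, mul_one]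
      gcongr

lemma integral_Ioi_comp_min_mul_exp_neg {a l : ℝ} (hal : a ≤ l) {f : ℝ → ℝ}
    (hf : IntegrableOn (fun x ↦ f x * exp (-x)) (Ioc a l)) :
    ∫ x in Ioi a, f (min x l) * exp (-x)
      = (∫ x in Ioc a l, f x * exp (-x)) + f l * exp (-l) := by
  have hbelow : EqOn (fun x ↦ f x * exp (-x)) (fun x ↦ f (min x l) * exp (-x)) (Ioc a l) :=
    fun x hx ↦ by simp only [min_eq_left hx.2]
  have habove : EqOn (fun x ↦ f l * exp (-x)) (fun x ↦ f (min x l) * exp (-x)) (Ioi l) :=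
    fun x (hx : l < x) ↦ by simp only [min_eq_right hx.le]
  have hf' : IntegrableOn (fun x ↦ f l * exp (-x)) (Ioi l) :=
    (integrableOn_exp_neg_Ioi l).const_mul (f l)
  rw [← Ioc_union_Ioi_eq_Ioi hal, setIntegral_union (Ioc_disjoint_Ioi le_rfl) measurableSet_Ioi
    (hf.congr_fun hbelow measurableSet_Ioc) (hf'.congr_fun habove measurableSet_Ioi),
    ← setIntegral_congr_fun measurableSet_Ioc hbelow,
    ← setIntegral_congr_fun measurableSet_Ioi habove, integral_const_mul, integral_exp_neg_Ioi]

lemma integral_Ioc_exp_neg {a b : ℝ} (hab : a ≤ b) :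
    ∫ x in Ioc a b, exp (-x) = exp (-a) - exp (-b) := by
  rw [← intervalIntegral.integral_of_le hab, intervalIntegral.integral_comp_neg exp, integral_exp]

lemma div_sqrt_two_pi_mul_one_div_mul_sqrt_pi_div_two {ψ : ℝ} (hψ : ψ ≠ 0) :
    ψ / √(2 * π) * (1 / ψ * √(π / 2)) = 1 / 2 := by
  have hsqrt : √(2 * π) = 2 * √(π / 2) := by
    rw [show 2 * π = 2 ^ 2 * (π / 2) by ring, sqrt_mul (by positivity), sqrt_sq zero_le_two]
  have hne : √(π / 2) ≠ 0 := by positivity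
  rw [hsqrt]
  field_simp

section Omega

variable {ψ θ ϱ ϑ : ℝ}

-- `hleft` and `hright` say that the linear piece of `Ω` equals `1` at `ϱ` and `0` at `ϑ`.
lemma Omega_eq_max_sub_max (hleft : ψ / √(2 * π) * (θ - ϱ) = 1 / 2)
    (hright : ψ / √(2 * π) * (ϑ - θ) = 1 / 2) (hle : ϱ ≤ ϑ) (γ : ℝ) :
    Omega ψ θ ϱ ϑ γ = ψ / √(2 * π) * (max (ϑ - γ) 0 - max (ϱ - γ) 0) := by
  unfold Omega
  split_ifs with hϱ hϑ
  · rw [max_eq_left (by linarith), max_eq_left (by linarith)]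
    linarith
  · rw [max_eq_left (by linarith), max_eq_right (by linarith)]
    linarith
  · rw [max_eq_right (by linarith), max_eq_right (by linarith)]
    simp

lemma integral_Ioi_Omega_mul_exp_neg (hleft : ψ / √(2 * π) * (θ - ϱ) = 1 / 2)
    (hright : ψ / √(2 * π) * (ϑ - θ) = 1 / 2) (hle : ϱ ≤ ϑ) (hϱ : 0 ≤ ϱ) {m : ℝ} (hm : 0 < m) :
    ∫ y in Ioi 0, Omega ψ θ ϱ ϑ (m * y) * exp (-y)
      = 1 + ψ / √(2 * π) * m * (exp (-(ϑ / m)) - exp (-(ϱ / m))) := by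
  simp only [Omega_eq_max_sub_max hleft hright hle, mul_assoc, sub_mul]
  rw [integral_const_mul, integral_sub (integrableOn_max_sub_mul_zero_mul_exp_neg m ϑ)
    (integrableOn_max_sub_mul_zero_mul_exp_neg m ϱ),
    integral_Ioi_max_sub_mul_zero_mul_exp_neg hm (hϱ.trans hle),
    integral_Ioi_max_sub_mul_zero_mul_exp_neg hm hϱ]
  linear_combination hleft + hright

lemma integral_Ioi_integral_Ioi_Omega (hleft : ψ / √(2 * π) * (θ - ϱ) = 1 / 2)
    (hright : ψ / √(2 * π) * (ϑ - θ) = 1 / 2) (hle : ϱ ≤ ϑ) (hϱ : 0 ≤ ϱ)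
    {φ l : ℝ} (hφ : 0 < φ) (hl : 0 < l) :
    ∫ x in Ioi 0, ∫ y in Ioi 0, Omega ψ θ ϱ ϑ (φ * y * min x l) * exp (-x - y)
      = 1 + ψ / √(2 * π) * φ *
        ((∫ x in Ioc 0 l, x * exp (-(ϑ / φ / x)) * exp (-x))
          - (∫ x in Ioc 0 l, x * exp (-(ϱ / φ / x)) * exp (-x))
          + l * (exp (-(ϑ / φ / l)) - exp (-(ϱ / φ / l))) * exp (-l)) := by
  let c := ψ / √(2 * π) * φ
  let g (b x : ℝ) : ℝ := x * exp (-(b / φ / x))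
  have hinner : ∀ x ∈ Ioi 0, ∫ y in Ioi 0, Omega ψ θ ϱ ϑ (φ * y * min x l) * exp (-x - y)
      = (1 + c * (g ϑ (min x l) - g ϱ (min x l))) * exp (-x) := by
    intro x (hx : 0 < x)
    simp only [sub_eq_add_neg (-x), add_comm (-x), exp_add, ← mul_assoc,
      mul_right_comm φ _ (min x l)]
    rw [integral_mul_const, integral_Ioi_Omega_mul_exp_neg hleft hright hle hϱ
      (mul_pos hφ (lt_min hx hl))]
    simp only [c, g, div_div]
    ring
  have hg (b : ℝ) (hb : 0 ≤ b) : IntegrableOn (fun x ↦ g b x * exp (-x)) (Ioc 0 l) := by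
    simpa only [pow_one] using
      integrableOn_pow_mul_exp_neg_div_mul_exp_neg 1 l (div_nonneg hb hφ.le)
  have hdiff : IntegrableOn (fun x ↦ c * (g ϑ x * exp (-x) - g ϱ x * exp (-x))) (Ioc 0 l) :=
    ((hg ϑ (hϱ.trans hle)).sub (hg ϱ hϱ)).const_mul c
  have hexp : IntegrableOn (fun x ↦ exp (-x)) (Ioc 0 l) :=
    (integrableOn_exp_neg_Ioi 0).mono_set Ioc_subset_Ioi_self
  have hexpand (x : ℝ) : (1 + c * (g ϑ x - g ϱ x)) * exp (-x)
      = exp (-x) + c * (g ϑ x * exp (-x) - g ϱ x * exp (-x)) := by ring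
  rw [setIntegral_congr_fun measurableSet_Ioi hinner,
    integral_Ioi_comp_min_mul_exp_neg (f := fun x ↦ 1 + c * (g ϑ x - g ϱ x)) hl.le
      (by simp only [hexpand]; exact hexp.add hdiff)]
  simp only [hexpand]
  rw [integral_add hexp hdiff, integral_const_mul, integral_sub (hg ϑ (hϱ.trans hle)) (hg ϱ hϱ),
    integral_Ioc_exp_neg hl.le, neg_zero, exp_zero]
  ring

end Omega

theorem stmt_8 (θ ψ φ l ϱ ϑ : ℝ) (hψ : 0 < ψ) (hφ : 0 < φ) (hl : 0 < l)
    (hϱ : ϱ = θ - (1 / ψ) * Real.sqrt (π / 2))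
    (hϑ : ϑ = θ + (1 / ψ) * Real.sqrt (π / 2))
    (hϱpos : 0 < ϱ) :
    Summable (fun i : ℕ =>
      (-1 : ℝ) ^ i * l ^ (i + 1) / (Nat.factorial i) *
        (ψ * l * φ / Real.sqrt (2 * π) *
            (Ei (i + 3) (ϑ / (l * φ)) - Ei (i + 3) (ϱ / (l * φ)))
          - (1 / 2 - ψ * (θ - ϱ) / Real.sqrt (2 * π)) * Ei (i + 2) (ϱ / (l * φ))
          - (1 / 2 + ψ * (θ - ϑ) / Real.sqrt (2 * π)) * Ei (i + 2) (ϑ / (l * φ)))) ∧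
    ∫ x in Set.Ioi (0 : ℝ),
        (∫ y in Set.Ioi (0 : ℝ), Omega ψ θ ϱ ϑ (φ * y * min x l) * Real.exp (-x - y))
      = 1
        - (1 / 2 - ψ / Real.sqrt (2 * π) * (θ - ϱ - l * φ)) * Real.exp (-l - ϱ / (l * φ))
        - (1 / 2 + ψ / Real.sqrt (2 * π) * (θ - ϑ - l * φ)) * Real.exp (-l - ϑ / (l * φ))
        + ∑' i : ℕ, (-1 : ℝ) ^ i * l ^ (i + 1) / (Nat.factorial i) *
            (ψ * l * φ / Real.sqrt (2 * π) *
                (Ei (i + 3) (ϑ / (l * φ)) - Ei (i + 3) (ϱ / (l * φ)))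
              - (1 / 2 - ψ * (θ - ϱ) / Real.sqrt (2 * π)) * Ei (i + 2) (ϱ / (l * φ))
              - (1 / 2 + ψ * (θ - ϑ) / Real.sqrt (2 * π)) * Ei (i + 2) (ϑ / (l * φ))) := by
  have hwidth := div_sqrt_two_pi_mul_one_div_mul_sqrt_pi_div_two hψ.ne'
  have hleft : ψ / √(2 * π) * (θ - ϱ) = 1 / 2 := by rw [← hwidth, hϱ]; ring
  have hright : ψ / √(2 * π) * (ϑ - θ) = 1 / 2 := by rw [← hwidth, hϑ]; ring
  have hle : ϱ ≤ ϑ := by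
    have : 0 < 1 / ψ * √(π / 2) := by positivity
    linarith
  have hmoment (b : ℝ) (hb : 0 < b) :
      HasSum (fun i : ℕ ↦ (-1) ^ i * l ^ (i + 1) / i.factorial * (l * Ei (i + 3) (b / (l * φ))))
        (∫ x in Ioc 0 l, x * exp (-(b / φ / x)) * exp (-x)) := by
    simpa only [pow_one, div_div, mul_comm φ l] using
      hasSum_integral_Ioc_pow_mul_exp_neg_div 1 hl (div_pos hb hφ)
  have hseries := ((hmoment ϑ (hϱpos.trans_le hle)).sub (hmoment ϱ hϱpos)).mul_left
    (ψ / √(2 * π) * φ)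
  have hϱcoeff : 1 / 2 - ψ * (θ - ϱ) / √(2 * π) = 0 := by linear_combination -hleft
  have hϑcoeff : 1 / 2 + ψ * (θ - ϑ) / √(2 * π) = 0 := by linear_combination -hright
  have hterm (a u v : ℝ) : a * (ψ * l * φ / √(2 * π) * (u - v))
      = ψ / √(2 * π) * φ * (a * (l * u) - a * (l * v)) := by ring
  simp only [hϱcoeff, hϑcoeff, zero_mul, sub_zero, hterm]
  refine ⟨hseries.summable, ?_⟩
  rw [hseries.tsum_eq, integral_Ioi_integral_Ioi_Omega hleft hright hle hϱpos.le hφ hl]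
  simp only [sub_eq_add_neg (-l), exp_add, div_div, mul_comm φ l]
  linear_combination -exp (-l) * exp (-(ϱ / (l * φ))) * hleft
    - exp (-l) * exp (-(ϑ / (l * φ))) * hright
end

section
/- For every real number z > 0, the function F(z) = -(z/2) ∫₀^∞ t^{-2} e^{-t - z/t} dt is differentiable at z with derivative F'(z) = (1/2) ∫₀^∞ t^{-1} e^{-t - z/t} dt. (Equivalently, z ↦ -√z K₁(2√z) is an antiderivative of z ↦ K₀(2√z) on (0, ∞).) -/
open MeasureTheory Real

/-!
Write `Γ(s; z) = ∫₀^∞ t^(s-1) e^(-t-z/t) dt`. Differentiating under the integral sign gives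
`∂Γ(s; z)/∂z = -Γ(s-1; z)`, and integrating the `t`-derivative of `t^s e^(-t-z/t)`, whose boundary
terms vanish, gives `Γ(s+1; z) = s Γ(s; z) + z Γ(s-1; z)`. Together,
`d/dz (z^(-s) Γ(s; z)) = -z^(-s-1) Γ(s+1; z)`, and the case `s = -1` is the claim.
All the analysis rests on `e^(-z/t) ≤ n! (t/z)^n`, which dominates the integrand by that of an
ordinary Gamma integral, of exponent as large as one likes.
-/

open Set Filter Topology

lemma integral_Ioi_of_hasDerivAt_of_tendsto_nhdsGT {E : Type*} [NormedAddCommGroup E]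
    [NormedSpace ℝ E] [CompleteSpace E] {f f' : ℝ → E} {a : ℝ} {l m : E}
    (hderiv : ∀ x ∈ Ioi a, HasDerivAt f (f' x) x) (f'int : IntegrableOn f' (Ioi a))
    (ha : Tendsto f (𝓝[>] a) (𝓝 l)) (hf : Tendsto f atTop (𝓝 m)) :
    ∫ x in Ioi a, f' x = m - l := by
  have heq : EqOn (Function.update f a l) f (Ioi a) :=
    fun x hx ↦ Function.update_of_ne (mem_Ioi.1 hx).ne' l f
  have hcont : ContinuousWithinAt (Function.update f a l) (Ici a) a := by
    rwa [continuousWithinAt_update_same, Ici_sdiff_left]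
  have hderiv' : ∀ x ∈ Ioi a, HasDerivAt (Function.update f a l) (f' x) x :=
    fun x hx ↦ (hderiv x hx).congr_of_eventuallyEq (heq.eventuallyEq_of_mem (Ioi_mem_nhds hx))
  have hf' : Tendsto (Function.update f a l) atTop (𝓝 m) :=
    hf.congr' (heq.eventuallyEq_of_mem (Ioi_mem_atTop a)).symm
  simpa using integral_Ioi_of_hasDerivAt_of_tendsto hcont hderiv' f'int hf'

/-- The integrand of `extendedGamma`, with the exponent `s - 1` of the Gamma integral. -/
noncomputable def extendedGammaIntegrand (s z t : ℝ) : ℝ :=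
  t ^ (s - 1) * exp (-t - z / t)

/-- The extended Gamma function of Chaudhry and Zubair, equal to `2 z^(s/2) K_s(2√z)` for `z > 0`.
Where the integral diverges (`z < 0`, or `z = 0` and `s ≤ 0`) the value is `0`. -/
noncomputable def extendedGamma (s z : ℝ) : ℝ :=
  ∫ t in Ioi 0, extendedGammaIntegrand s z t

section

variable {s z t : ℝ}

lemma extendedGammaIntegrand_nonneg (ht : 0 ≤ t) : 0 ≤ extendedGammaIntegrand s z t := by
  unfold extendedGammaIntegrand
  positivity

lemma extendedGammaIntegrand_le_of_le {y : ℝ} (ht : 0 ≤ t) (hyz : y ≤ z) :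
    extendedGammaIntegrand s z t ≤ extendedGammaIntegrand s y t := by
  unfold extendedGammaIntegrand
  gcongr

lemma extendedGammaIntegrand_sub_one (ht : t ≠ 0) :
    extendedGammaIntegrand (s - 1) z t = extendedGammaIntegrand s z t / t := by
  rw [extendedGammaIntegrand, extendedGammaIntegrand, rpow_sub_one ht]
  ring

lemma extendedGammaIntegrand_add_one (ht : t ≠ 0) :
    extendedGammaIntegrand (s + 1) z t = t * extendedGammaIntegrand s z t := by
  have h := extendedGammaIntegrand_sub_one (s := s + 1) (z := z) ht
  rw [add_sub_cancel_right] at h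
  rw [h, mul_div_cancel₀ _ ht]

lemma measurable_extendedGammaIntegrand (s z : ℝ) : Measurable (extendedGammaIntegrand s z) := by
  unfold extendedGammaIntegrand
  fun_prop

lemma exp_neg_le_factorial_div_pow {x : ℝ} (hx : 0 < x) (n : ℕ) :
    exp (-x) ≤ n.factorial / x ^ n := by
  rw [exp_neg, ← inv_div]
  exact inv_anti₀ (by positivity) (pow_div_factorial_le_exp x hx.le n)

lemma extendedGammaIntegrand_le (s : ℝ) (hz : 0 < z) (ht : 0 < t) (n : ℕ) :
    extendedGammaIntegrand s z t ≤ n.factorial / z ^ n * (exp (-t) * t ^ (s + n - 1)) := by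
  calc extendedGammaIntegrand s z t
      = t ^ (s - 1) * (exp (-t) * exp (-(z / t))) := by
        rw [extendedGammaIntegrand, ← exp_add, ← sub_eq_add_neg]
    _ ≤ t ^ (s - 1) * (exp (-t) * (n.factorial / (z / t) ^ n)) := by
        gcongr
        exact exp_neg_le_factorial_div_pow (div_pos hz ht) n
    _ = n.factorial / z ^ n * (exp (-t) * t ^ (s + n - 1)) := by
        rw [add_sub_right_comm, rpow_add_natCast ht.ne', div_pow]
        field_simp

lemma integrableOn_extendedGammaIntegrand (s : ℝ) (hz : 0 < z) :
    IntegrableOn (extendedGammaIntegrand s z) (Ioi 0) := by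
  obtain ⟨n, hn⟩ := exists_nat_gt (-s)
  refine ((GammaIntegral_convergent (s := s + n) (by linarith)).const_mul
    (n.factorial / z ^ n)).mono' (measurable_extendedGammaIntegrand s z).aestronglyMeasurable ?_
  filter_upwards [ae_restrict_mem measurableSet_Ioi] with t ht
  rw [norm_of_nonneg (extendedGammaIntegrand_nonneg (mem_Ioi.1 ht).le)]
  exact extendedGammaIntegrand_le s hz ht n

lemma tendsto_extendedGammaIntegrand_nhdsGT_zero (s : ℝ) (hz : 0 < z) :
    Tendsto (extendedGammaIntegrand s z) (𝓝[>] 0) (𝓝 0) := by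
  obtain ⟨n, hn⟩ := exists_nat_gt (1 - s)
  have hexponent : 0 < s + n - 1 := by linarith
  have hbound : Tendsto (fun t : ℝ ↦ n.factorial / z ^ n * (exp (-t) * t ^ (s + n - 1)))
      (𝓝[>] 0) (𝓝 0) := by
    have hcont : Continuous fun t : ℝ ↦ n.factorial / z ^ n * (exp (-t) * t ^ (s + n - 1)) := by
      fun_prop (disch := exact hexponent.le)
    simpa [zero_rpow hexponent.ne'] using (hcont.tendsto 0).mono_left nhdsWithin_le_nhds
  refine squeeze_zero' ?_ ?_ hbound <;> filter_upwards [self_mem_nhdsWithin] with t ht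
  · exact extendedGammaIntegrand_nonneg (mem_Ioi.1 ht).le
  · exact extendedGammaIntegrand_le s hz ht n

lemma hasDerivAt_extendedGammaIntegrand_param (s z : ℝ) (ht : t ≠ 0) :
    HasDerivAt (fun z ↦ extendedGammaIntegrand s z t) (-extendedGammaIntegrand (s - 1) z t) z := by
  have h := (((hasDerivAt_id' z).div_const t).const_sub (-t)).exp.const_mul (t ^ (s - 1))
  refine h.congr_deriv ?_
  rw [extendedGammaIntegrand_sub_one ht, extendedGammaIntegrand]
  ring

lemma hasDerivAt_extendedGammaIntegrand_add_one (s z : ℝ) (ht : t ≠ 0) :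
    HasDerivAt (extendedGammaIntegrand (s + 1) z)
      (s * extendedGammaIntegrand s z t + z * extendedGammaIntegrand (s - 1) z t
        - extendedGammaIntegrand (s + 1) z t) t := by
  have hpow : HasDerivAt (fun t : ℝ ↦ t ^ (s + 1 - 1)) (s * t ^ (s - 1)) t := by
    simpa using hasDerivAt_rpow_const (p := s) (Or.inl ht)
  have hexponent : HasDerivAt (fun t : ℝ ↦ -t - z / t) (-1 + z / t ^ 2) t := by
    simpa [div_eq_mul_inv] using
      (hasDerivAt_id' t).fun_neg.fun_sub ((hasDerivAt_inv ht).const_mul z)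
  refine (hpow.mul hexponent.exp).congr_deriv ?_
  rw [extendedGammaIntegrand_add_one ht, extendedGammaIntegrand_sub_one ht, extendedGammaIntegrand,
    add_sub_cancel_right, rpow_sub_one ht]
  field_simp
  ring

lemma hasDerivAt_extendedGamma (s : ℝ) (hz : 0 < z) :
    HasDerivAt (extendedGamma s) (-extendedGamma (s - 1) z) z := by
  have hdominated : ∀ᵐ t ∂volume.restrict (Ioi 0), ∀ x ∈ Ioi (z / 2),
      ‖-extendedGammaIntegrand (s - 1) x t‖ ≤ extendedGammaIntegrand (s - 1) (z / 2) t := by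
    filter_upwards [ae_restrict_mem measurableSet_Ioi] with t ht x hx
    have ht₀ : 0 ≤ t := (mem_Ioi.1 ht).le
    rw [norm_neg, norm_of_nonneg (extendedGammaIntegrand_nonneg ht₀)]
    exact extendedGammaIntegrand_le_of_le ht₀ (mem_Ioi.1 hx).le
  have hderiv : ∀ᵐ t ∂volume.restrict (Ioi 0), ∀ x ∈ Ioi (z / 2),
      HasDerivAt (fun z ↦ extendedGammaIntegrand s z t)
        (-extendedGammaIntegrand (s - 1) x t) x := by
    filter_upwards [ae_restrict_mem measurableSet_Ioi] with t ht x _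
    exact hasDerivAt_extendedGammaIntegrand_param s x (mem_Ioi.1 ht).ne'
  have h := (hasDerivAt_integral_of_dominated_loc_of_deriv_le (Ioi_mem_nhds (half_lt_self hz))
    (.of_forall fun x ↦ (measurable_extendedGammaIntegrand s x).aestronglyMeasurable)
    (integrableOn_extendedGammaIntegrand s hz)
    (measurable_extendedGammaIntegrand (s - 1) z).neg.aestronglyMeasurable
    hdominated (integrableOn_extendedGammaIntegrand (s - 1) (half_pos hz)) hderiv).2
  exact h.congr_deriv (integral_neg _)

lemma extendedGamma_add_one (s : ℝ) (hz : 0 < z) :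
    extendedGamma (s + 1) z = s * extendedGamma s z + z * extendedGamma (s - 1) z := by
  have hintegrable (r : ℝ) := integrableOn_extendedGammaIntegrand r hz
  have hsum := ((hintegrable s).const_mul s).fun_add ((hintegrable (s - 1)).const_mul z)
  have hderiv : ∀ t ∈ Ioi (0 : ℝ), HasDerivAt (extendedGammaIntegrand (s + 1) z) _ t :=
    fun t ht ↦ hasDerivAt_extendedGammaIntegrand_add_one s z (mem_Ioi.1 ht).ne'
  have hinfty := tendsto_zero_of_hasDerivAt_of_integrableOn_Ioi hderiv
    (hsum.sub (hintegrable (s + 1))) (hintegrable (s + 1))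
  have hibp := integral_Ioi_of_hasDerivAt_of_tendsto_nhdsGT hderiv (hsum.sub (hintegrable (s + 1)))
    (tendsto_extendedGammaIntegrand_nhdsGT_zero (s + 1) hz) hinfty
  rw [integral_sub hsum (hintegrable (s + 1)), integral_add ((hintegrable s).const_mul s)
    ((hintegrable (s - 1)).const_mul z), integral_const_mul, integral_const_mul, sub_zero] at hibp
  exact (sub_eq_zero.1 hibp).symm

lemma hasDerivAt_rpow_neg_mul_extendedGamma (s : ℝ) (hz : 0 < z) :
    HasDerivAt (fun z ↦ z ^ (-s) * extendedGamma s z)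
      (-(z ^ (-s - 1) * extendedGamma (s + 1) z)) z := by
  refine ((hasDerivAt_rpow_const (p := -s) (Or.inl hz.ne')).mul
    (hasDerivAt_extendedGamma s hz)).congr_deriv ?_
  rw [extendedGamma_add_one s hz, rpow_sub_one hz.ne']
  field_simp
  ring

end

theorem stmt_12 (z : ℝ) (hz : 0 < z) :
    HasDerivAt
      (fun z : ℝ => -(z / 2) * ∫ t in Set.Ioi (0 : ℝ), t ^ (-2 : ℤ) * Real.exp (-t - z / t))
      ((1 / 2) * ∫ t in Set.Ioi (0 : ℝ), t⁻¹ * Real.exp (-t - z / t)) z := by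
  have hneg_one (y : ℝ) : extendedGamma (-1) y =
      ∫ t in Ioi (0 : ℝ), t ^ (-2 : ℤ) * exp (-t - y / t) := by
    simp only [extendedGamma, extendedGammaIntegrand, ← rpow_intCast]
    norm_num
  have hzero : extendedGamma 0 z = ∫ t in Ioi (0 : ℝ), t⁻¹ * exp (-t - z / t) := by
    simp only [extendedGamma, extendedGammaIntegrand, zero_sub, rpow_neg_one]
  simp only [← hneg_one, ← hzero]
  have hF : (fun y ↦ -(y / 2) * extendedGamma (-1) y) =
      fun y ↦ -1 / 2 * (y ^ (-(-1) : ℝ) * extendedGamma (-1) y) := by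
    ext y
    rw [neg_neg, rpow_one]
    ring
  rw [hF]
  exact ((hasDerivAt_rpow_neg_mul_extendedGamma (-1) hz).const_mul (-1 / 2)).congr_deriv
    (by norm_num)
end

section
/- The limit as z → 0⁺ of z · ∫₀^∞ t^{-2} e^{-t - z/t} dt equals 1. (Equivalently, lim_{z→0⁺} 2√z K₁(2√z) = 1.) -/
open MeasureTheory Real Filter

/-!
The substitution `t = z / u` exchanges the two terms of the exponent and turns
`z ^ ν * ∫ t ^ (-ν - 1) * exp (-t - z / t)` into `∫ u ^ (ν - 1) * exp (-u - z / u)`, which removes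
the singularity as `z → 0⁺`: the new integrand is dominated by that of `Γ(ν)` and converges to it
pointwise. The theorem is the case `ν = 1`.
-/

theorem integral_comp_const_div_Ioi {E : Type*} [NormedAddCommGroup E] [NormedSpace ℝ E]
    (g : ℝ → E) {c : ℝ} (hc : 0 < c) :
    ∫ t in Set.Ioi (0 : ℝ), (c / t ^ 2) • g (c / t) = ∫ u in Set.Ioi (0 : ℝ), g u := by
  calc ∫ t in Set.Ioi (0 : ℝ), (c / t ^ 2) • g (c / t)
      = ∫ t in Set.Ioi (0 : ℝ), (|(-1 : ℝ)| * t ^ ((-1 : ℝ) - 1)) • (c • g (c * t ^ (-1 : ℝ))) := by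
        refine setIntegral_congr_fun measurableSet_Ioi fun t (ht : 0 < t) ↦ ?_
        have hpow : t ^ ((-1 : ℝ) - 1) = (t ^ 2)⁻¹ := by
          rw [show (-1 : ℝ) - 1 = -(2 : ℕ) by norm_num, rpow_neg ht.le, rpow_natCast]
        simp only [hpow, rpow_neg_one, smul_smul, abs_neg, abs_one, one_mul, div_eq_inv_mul,
          mul_comm c]
    _ = ∫ y in Set.Ioi (0 : ℝ), c • g (c * y) :=
        integral_comp_rpow_Ioi (fun y ↦ c • g (c * y)) (by norm_num)
    _ = ∫ u in Set.Ioi (0 : ℝ), g u := by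
        rw [integral_smul, integral_comp_mul_left_Ioi' g 0 hc, mul_zero]

theorem rpow_mul_integral_rpow_mul_exp_neg_sub_div (ν : ℝ) {z : ℝ} (hz : 0 < z) :
    z ^ ν * ∫ t in Set.Ioi (0 : ℝ), t ^ (-ν - 1) * exp (-t - z / t) =
      ∫ u in Set.Ioi (0 : ℝ), u ^ (ν - 1) * exp (-u - z / u) := by
  rw [← integral_comp_const_div_Ioi (fun u ↦ u ^ (ν - 1) * exp (-u - z / u)) hz,
    ← integral_const_mul]
  refine setIntegral_congr_fun measurableSet_Ioi fun t (ht : 0 < t) ↦ ?_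
  have hpow : z ^ ν * t ^ (-ν - 1) = z / t ^ 2 * (z / t) ^ (ν - 1) := by
    rw [div_rpow hz.le ht.le, rpow_sub_one hz.ne', rpow_sub_one ht.ne', rpow_sub_one ht.ne',
      rpow_neg ht.le]
    field_simp
  have hexp : -t - z / t = -(z / t) - z / (z / t) := by
    rw [div_div_cancel₀ hz.ne']
    ring
  simp only [smul_eq_mul, ← mul_assoc, hpow, ← hexp]

theorem tendsto_integral_exp_neg_mul_smul {α E : Type*} [MeasurableSpace α] {μ : Measure α}
    [NormedAddCommGroup E] [NormedSpace ℝ E] {φ : α → ℝ} {f : α → E}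
    (hφ : AEMeasurable φ μ) (hφ_nonneg : 0 ≤ᵐ[μ] φ) (hf : Integrable f μ) :
    Tendsto (fun z : ℝ ↦ ∫ x, exp (-(z * φ x)) • f x ∂μ) (nhdsWithin 0 (Set.Ici 0))
      (nhds (∫ x, f x ∂μ)) := by
  refine tendsto_integral_filter_of_dominated_convergence (fun x ↦ ‖f x‖) ?measurable ?bound
    hf.norm ?limit
  case measurable =>
    exact .of_forall fun z ↦
      (hφ.const_mul z).neg.exp.aestronglyMeasurable.smul hf.aestronglyMeasurable
  case bound =>
    filter_upwards [self_mem_nhdsWithin] with z (hz : 0 ≤ z)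
    filter_upwards [hφ_nonneg] with x (hx : 0 ≤ φ x)
    rw [norm_smul, norm_of_nonneg (exp_pos _).le]
    exact mul_le_of_le_one_left (norm_nonneg _) (exp_le_one_iff.2 (neg_nonpos.2 (mul_nonneg hz hx)))
  case limit =>
    refine .of_forall fun x ↦ tendsto_nhdsWithin_of_tendsto_nhds ?_
    have hcont : Continuous fun z : ℝ ↦ exp (-(z * φ x)) • f x := by fun_prop
    simpa using hcont.tendsto 0

theorem tendsto_integral_rpow_mul_exp_neg_sub_div {ν : ℝ} (hν : 0 < ν) :
    Tendsto (fun z : ℝ ↦ ∫ u in Set.Ioi (0 : ℝ), u ^ (ν - 1) * exp (-u - z / u))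
      (nhdsWithin 0 (Set.Ici 0)) (nhds (Gamma ν)) := by
  have hinv_nonneg : 0 ≤ᵐ[volume.restrict (Set.Ioi (0 : ℝ))] fun u : ℝ ↦ u⁻¹ := by
    filter_upwards [ae_restrict_mem measurableSet_Ioi] with u hu using (inv_pos.2 hu).le
  rw [Gamma_eq_integral hν]
  refine (tendsto_integral_exp_neg_mul_smul measurable_inv.aemeasurable hinv_nonneg
    (GammaIntegral_convergent hν)).congr fun z ↦ integral_congr_ae (.of_forall fun u ↦ ?_)
  simp only [smul_eq_mul, sub_eq_add_neg, exp_add, div_eq_mul_inv]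
  ring

theorem stmt_14_general {ν : ℝ} (hν : 0 < ν) :
    Tendsto (fun z : ℝ ↦ z ^ ν * ∫ t in Set.Ioi (0 : ℝ), t ^ (-ν - 1) * exp (-t - z / t))
      (nhdsWithin 0 (Set.Ioi 0)) (nhds (Gamma ν)) := by
  refine ((tendsto_integral_rpow_mul_exp_neg_sub_div hν).mono_left
    (nhdsWithin_mono 0 Set.Ioi_subset_Ici_self)).congr' ?_
  filter_upwards [self_mem_nhdsWithin] with z hz
  exact (rpow_mul_integral_rpow_mul_exp_neg_sub_div ν hz).symm

theorem stmt_14 :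
    Tendsto (fun z : ℝ => z * ∫ t in Set.Ioi (0 : ℝ), t ^ (-2 : ℤ) * Real.exp (-t - z / t))
      (nhdsWithin 0 (Set.Ioi 0)) (nhds 1) := by
  have hexponent : (-1 - 1 : ℝ) = (-2 : ℤ) := by norm_num
  simpa only [rpow_one, Gamma_one, hexponent, rpow_intCast] using stmt_14_general one_pos
end

section
/- Let g > 0, u > 0, κ > 0, σ² > 0 be real numbers, let n ≥ 1 be a real number, and let a > 0 (a represents the harvested power budget v η P_D min(g_DS, λ_S)/κ minus the circuit consumption P_c(n+u), which is positive by the energy-sufficiency condition). Define the equivalent SNR under imperfect CSI as a function of the pilot power P ≥ 0 by γ(P) = (g/(κσ²)) · P_S(P) · uP / (uP + P_S(P) + κσ²), where P_S(P) = (a - uP)/n. Then γ is strictly concave on [0, ∞); in particular its second derivative in P is strictly negative wherever it exists on (0, ∞). -/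
open Real

/-!
After clearing the factor `n`, the SNR is a quadratic over a linear function of the pilot power.
The second derivative of `(p x² + q x + r) / (m x + b)` is `2 R / (m x + b)³`, where the constant
`R = p b² - q b m + r m²` is the resultant of numerator and denominator. Here
`R = -(g / (κ σ²)) u² n (a + n κ σ²) (a + κ σ²)`, which is negative, while the denominator is
positive on `[0, ∞)` because `n ≥ 1`.
-/

section QuadraticDivLinear

section NormedField

variable {𝕜 : Type*} [NontriviallyNormedField 𝕜] (p q r : 𝕜) {m b x : 𝕜}

lemma hasDerivAt_quadratic_div_linear (hx : m * x + b ≠ 0) :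
    HasDerivAt (fun y => (p * y ^ 2 + q * y + r) / (m * y + b))
      ((p * m * x ^ 2 + 2 * p * b * x + (q * b - r * m)) / (m * x + b) ^ 2) x := by
  have h_num : HasDerivAt (fun y => p * y ^ 2 + q * y + r) (p * (2 * x) + q) x := by
    simpa using (((hasDerivAt_pow 2 x).const_mul p).add (hasDerivAt_const_mul q)).add_const r
  have h_den : HasDerivAt (fun y => m * y + b) m x := (hasDerivAt_const_mul m).add_const b
  exact (h_num.fun_div h_den hx).congr_deriv (by ring)

lemma hasDerivAt_deriv_quadratic_div_linear (hx : m * x + b ≠ 0) :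
    HasDerivAt (deriv fun y => (p * y ^ 2 + q * y + r) / (m * y + b))
      (2 * (p * b ^ 2 - q * b * m + r * m ^ 2) / (m * x + b) ^ 3) x := by
  have h_deriv : (deriv fun y => (p * y ^ 2 + q * y + r) / (m * y + b)) =ᶠ[nhds x] fun y =>
      (p * m * y ^ 2 + 2 * p * b * y + (q * b - r * m)) / (m * y + b) ^ 2 := by
    have h_cont : ContinuousAt (fun y => m * y + b) x := by fun_prop
    filter_upwards [h_cont.eventually_ne hx] with y hy
    exact (hasDerivAt_quadratic_div_linear p q r hy).deriv
  have h_num : HasDerivAt (fun y => p * m * y ^ 2 + 2 * p * b * y + (q * b - r * m))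
      (p * m * (2 * x) + 2 * p * b) x := by
    simpa using (((hasDerivAt_pow 2 x).const_mul (p * m)).add
      (hasDerivAt_const_mul (2 * p * b))).add_const (q * b - r * m)
  have h_den : HasDerivAt (fun y => (m * y + b) ^ 2) (2 * (m * x + b) * m) x := by
    simpa using ((hasDerivAt_const_mul m).add_const b).fun_pow 2
  refine ((h_num.fun_div h_den (pow_ne_zero 2 hx)).congr_deriv ?_).congr_of_eventuallyEq h_deriv
  field_simp
  ring

end NormedField

variable {p q r m b x : ℝ}

lemma deriv_deriv_quadratic_div_linear_neg (hR : p * b ^ 2 - q * b * m + r * m ^ 2 < 0)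
    (hx : 0 < m * x + b) :
    deriv (deriv fun y => (p * y ^ 2 + q * y + r) / (m * y + b)) x < 0 := by
  rw [(hasDerivAt_deriv_quadratic_div_linear p q r hx.ne').deriv]
  exact div_neg_of_neg_of_pos (mul_neg_of_pos_of_neg two_pos hR) (pow_pos hx 3)

lemma strictConcaveOn_quadratic_div_linear {s : Set ℝ} (hs : Convex ℝ s)
    (hR : p * b ^ 2 - q * b * m + r * m ^ 2 < 0) (h_pos : ∀ y ∈ s, 0 < m * y + b) :
    StrictConcaveOn ℝ s fun y => (p * y ^ 2 + q * y + r) / (m * y + b) :=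
  strictConcaveOn_of_deriv2_neg hs
    (fun y hy => (hasDerivAt_quadratic_div_linear p q r
      (h_pos y hy).ne').continuousAt.continuousWithinAt)
    fun y hy => deriv_deriv_quadratic_div_linear_neg hR (h_pos y (interior_subset hy))

end QuadraticDivLinear

/-- The equivalent SNR `γ(P)` at the destination under imperfect CSI, as a function of the pilot
power `P`. The source power `P_S = (a - u P) / n` is substituted, and `σ2` stands for `σ²`. -/
noncomputable def equivalentSNR (g u κ σ2 n a P : ℝ) : ℝ :=
  g / (κ * σ2) * ((a - u * P) / n) * (u * P) / (u * P + (a - u * P) / n + κ * σ2)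

lemma equivalentSNR_eq_quadratic_div_linear (g u κ σ2 a : ℝ) {n : ℝ} (hn : n ≠ 0) :
    equivalentSNR g u κ σ2 n a = fun P =>
      (-(g / (κ * σ2) * u ^ 2) * P ^ 2 + g / (κ * σ2) * a * u * P + 0) /
        ((n - 1) * u * P + (a + n * (κ * σ2))) := by
  funext P
  have h_num : g / (κ * σ2) * ((a - u * P) / n) * (u * P) =
      (-(g / (κ * σ2) * u ^ 2) * P ^ 2 + g / (κ * σ2) * a * u * P + 0) / n := by ring
  have h_den : u * P + (a - u * P) / n + κ * σ2 =
      ((n - 1) * u * P + (a + n * (κ * σ2))) / n := by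
    field_simp
    ring
  rw [equivalentSNR, h_num, h_den, div_div_div_cancel_right₀ hn]

lemma resultant_equivalentSNR_neg {C u N n a : ℝ} (hC : 0 < C) (hu : u ≠ 0) (hn : 0 < n)
    (hb : 0 < a + n * N) (ha : 0 < a + N) :
    -(C * u ^ 2) * (a + n * N) ^ 2 - C * a * u * (a + n * N) * ((n - 1) * u) +
      0 * ((n - 1) * u) ^ 2 < 0 := by
  have h_factor : -(C * u ^ 2) * (a + n * N) ^ 2 - C * a * u * (a + n * N) * ((n - 1) * u) +
      0 * ((n - 1) * u) ^ 2 = -(C * u ^ 2 * n * (a + n * N) * (a + N)) := by ring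
  rw [h_factor, neg_lt_zero]
  positivity

theorem stmt_17_general {g u κ σ2 n a : ℝ} (hg : 0 < g) (hu : 0 < u) (hκ : 0 < κ)
    (hσ2 : 0 < σ2) (hn : 1 ≤ n) (ha : -(κ * σ2) < a) :
    StrictConcaveOn ℝ (Set.Ici 0) (equivalentSNR g u κ σ2 n a) ∧
      ∀ P : ℝ, 0 < P → deriv (deriv (equivalentSNR g u κ σ2 n a)) P < 0 := by
  have hn_pos : 0 < n := one_pos.trans_le hn
  have h_noise : 0 < κ * σ2 := mul_pos hκ hσ2
  have h_const : 0 < a + n * (κ * σ2) := by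
    linarith [le_mul_of_one_le_left h_noise.le hn]
  have h_den : ∀ P ∈ Set.Ici (0 : ℝ), 0 < (n - 1) * u * P + (a + n * (κ * σ2)) := fun P hP =>
    add_pos_of_nonneg_of_pos (mul_nonneg (mul_nonneg (sub_nonneg.2 hn) hu.le) hP) h_const
  have hR := resultant_equivalentSNR_neg (div_pos hg h_noise) hu.ne' hn_pos h_const
    (neg_lt_iff_pos_add.1 ha)
  rw [equivalentSNR_eq_quadratic_div_linear g u κ σ2 a hn_pos.ne']
  exact ⟨strictConcaveOn_quadratic_div_linear (convex_Ici 0) hR h_den,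
    fun P hP => deriv_deriv_quadratic_div_linear_neg hR (h_den P hP.le)⟩

theorem stmt_17 (g u κ σ2 n a : ℝ) (hg : 0 < g) (hu : 0 < u) (hκ : 0 < κ)
    (hσ2 : 0 < σ2) (hn : 1 ≤ n) (ha : 0 < a) :
    StrictConcaveOn ℝ (Set.Ici (0 : ℝ))
      (fun P : ℝ =>
        g / (κ * σ2) * ((a - u * P) / n) * (u * P)
          / (u * P + (a - u * P) / n + κ * σ2)) ∧
    ∀ P : ℝ, 0 < P →
      DifferentiableAt ℝ
        (deriv (fun P : ℝ =>
          g / (κ * σ2) * ((a - u * P) / n) * (u * P)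
            / (u * P + (a - u * P) / n + κ * σ2))) P →
      deriv (deriv (fun P : ℝ =>
          g / (κ * σ2) * ((a - u * P) / n) * (u * P)
            / (u * P + (a - u * P) / n + κ * σ2))) P < 0 := by
  obtain ⟨h_concave, h_deriv2⟩ := stmt_17_general hg hu hκ hσ2 hn
    ((neg_neg_of_pos (mul_pos hκ hσ2)).trans ha)
  exact ⟨h_concave, fun P hP _ => h_deriv2 P hP⟩
end
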